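/- arXiv:2505.14550 — 2 statements merged into one kernel-verified Lean document; each statement's English description precedes it below -/
import Mathlib

section
/- Regularity of the candidate solution: for every u in D(G), the map (x,t) ↦ Q(t)(x) is jointly continuous on E × [0,∞). -/
open MeasureTheory Set Filter Topology
open scoped ZeroAtInfty

/-- The candidate solution `Q(t) = E^x[u(M_{D_t})]`. -/
noncomputable def cand {E : Type*} [TopologicalSpace E]
    (P : ℝ → C₀(E, ℝ) →L[ℝ] C₀(E, ℝ)) (ν : Measure ℝ) (uφ : ℝ → ℝ)
    (u : C₀(E, ℝ)) (t : ℝ) : C₀(E, ℝ) :=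
  if t = 0 then u
  else ∫ h in Set.Ioo 0 t, uφ h • (∫ r in Set.Ioi (t - h), P (r + h) u ∂ν)

/-!
`Q t` is the mean of the bounded continuous orbit `F r = P r u` at the position `D t` reached by the
jump of the subordinator across level `t`. For `t > 0` its integrand is dominated by `‖u‖` times the
undershoot density `uφ h * ν (t - h, ∞)`. This bound moves with `t`, but its integral does not: the
renewal equation says that it is always `‖u‖`. Since `ν` has at most countably many atoms, both the
integrand and its bound are, for almost every `h`, continuous in `t`, so the generalized dominated
convergence theorem applies. As `t ↓ 0` the mass of `uφ` on `(0, t)` vanishes, so that jumps longer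
than any fixed `δ` contribute nothing in the limit: `D t` concentrates at `0`, and `Q t` tends to
`F 0 = u`.
-/

open scoped BoundedContinuousFunction

section Analysis

variable {α ι X : Type*} [NormedAddCommGroup X]

theorem tendsto_integral_of_tendsto_integral_bound [NormedSpace ℝ X] [MeasurableSpace α]
    {μ : Measure α} {l : Filter ι} [l.IsCountablyGenerated]
    {f : ι → α → X} {f₀ : α → X} {g : ι → α → ℝ} {g₀ : α → ℝ}
    (hf : ∀ᶠ i in l, AEStronglyMeasurable (f i) μ) (hf₀ : AEStronglyMeasurable f₀ μ)
    (hg : ∀ᶠ i in l, Integrable (g i) μ) (hg₀ : Integrable g₀ μ)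
    (hfg : ∀ᶠ i in l, ∀ᵐ a ∂μ, ‖f i a‖ ≤ g i a) (hfg₀ : ∀ᵐ a ∂μ, ‖f₀ a‖ ≤ g₀ a)
    (hf_lim : ∀ᵐ a ∂μ, Tendsto (fun i => f i a) l (𝓝 (f₀ a)))
    (hg_lim : ∀ᵐ a ∂μ, Tendsto (fun i => g i a) l (𝓝 (g₀ a)))
    (hg_int : Tendsto (fun i => ∫ a, g i a ∂μ) l (𝓝 (∫ a, g₀ a ∂μ))) :
    Tendsto (fun i => ∫ a, f i a ∂μ) l (𝓝 (∫ a, f₀ a ∂μ)) := by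
  have hf₀_int : Integrable f₀ μ := hg₀.mono' hf₀ hfg₀
  have hf_int : ∀ᶠ i in l, Integrable (f i) μ := by
    filter_upwards [hf, hg, hfg] with i hfi hgi hfgi using hgi.mono' hfi hfgi
  -- Unlike `‖f i - f₀‖`, its excess over `g i - g₀` has a fixed integrable bound, namely `2 g₀`.
  let excess (i : ι) (a : α) : ℝ := ‖f i a - f₀ a‖ - (g i a - g₀ a)
  have excess_int : ∀ᶠ i in l, Integrable (excess i) μ := by
    filter_upwards [hf_int, hg] with i hfi hgi using (hfi.sub hf₀_int).norm.sub (hgi.sub hg₀)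
  have excess_lim : Tendsto (fun i => ∫ a, max (excess i a) 0 ∂μ) l (𝓝 0) := by
    suffices Tendsto (fun i => ∫ a, max (excess i a) 0 ∂μ) l (𝓝 (∫ _, (0 : ℝ) ∂μ)) by
      simpa only [integral_zero] using this
    refine tendsto_integral_filter_of_dominated_convergence (fun a => 2 * g₀ a)
      (excess_int.mono fun i hi => hi.pos_part.aestronglyMeasurable) ?_ (hg₀.const_mul 2) ?_
    · filter_upwards [hfg] with i hfgi
      filter_upwards [hfgi, hfg₀] with a ha ha₀
      rw [Real.norm_of_nonneg (le_max_right _ _)]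
      refine max_le ?_ (by linarith [norm_nonneg (f₀ a)])
      linarith [norm_sub_le (f i a) (f₀ a)]
    · filter_upwards [hf_lim, hg_lim] with a hfa hga
      simpa [excess] using
        ((hfa.sub_const (f₀ a)).norm.sub (hga.sub_const (g₀ a))).max (tendsto_const_nhds (x := 0))
  rw [tendsto_iff_norm_sub_tendsto_zero]
  refine squeeze_zero' (.of_forall fun _ => norm_nonneg _) ?_
    (by simpa using excess_lim.add (hg_int.sub_const (∫ a, g₀ a ∂μ)))
  filter_upwards [hf_int, hg, excess_int] with i hfi hgi hei
  calc ‖∫ a, f i a ∂μ - ∫ a, f₀ a ∂μ‖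
      = ‖∫ a, (f i a - f₀ a) ∂μ‖ := by rw [integral_sub hfi hf₀_int]
    _ ≤ ∫ a, (max (excess i a) 0 + (g i a - g₀ a)) ∂μ := by
        refine norm_integral_le_of_norm_le (hei.pos_part.add (hgi.sub hg₀)) (.of_forall fun a => ?_)
        linarith [le_max_left (excess i a) 0]
    _ = ∫ a, max (excess i a) 0 ∂μ + (∫ a, g i a ∂μ - ∫ a, g₀ a ∂μ) := by
        rw [integral_add hei.pos_part (g := fun a => g i a - g₀ a) (hgi.sub hg₀),
          integral_sub hgi hg₀]

theorem continuousAt_setIntegral_Ioi [NormedSpace ℝ X] {ν : Measure ℝ} {f : ℝ → X} {a s : ℝ}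
    (hf : IntegrableOn f (Ioi a) ν) (has : a < s) (hs : ν {s} = 0) :
    ContinuousAt (fun s => ∫ r in Ioi s, f r ∂ν) s := by
  have restrict_eq : ∀ᶠ b in 𝓝 s,
      ∫ r in Ioi a, (Ioi b).indicator f r ∂ν = ∫ r in Ioi b, f r ∂ν := by
    filter_upwards [Ioi_mem_nhds has] with b hb
    rw [setIntegral_indicator measurableSet_Ioi,
      inter_eq_right.2 (Ioi_subset_Ioi (le_of_lt hb))]
  rw [ContinuousAt, ← restrict_eq.self_of_nhds]
  refine Tendsto.congr' restrict_eq ?_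
  refine tendsto_integral_filter_of_dominated_convergence (fun r => ‖f r‖)
    (.of_forall fun b => hf.aestronglyMeasurable.indicator measurableSet_Ioi)
    (.of_forall fun b => .of_forall fun r => norm_indicator_le_norm_self f r) hf.norm ?_
  filter_upwards [ae_restrict_of_ae (compl_mem_ae_iff.2 hs)] with r hr
  refine tendsto_const_nhds.congr' ?_
  rcases lt_or_gt_of_ne (show r ≠ s from hr) with hrs | hrs
  · filter_upwards [Ioi_mem_nhds hrs] with b (hb : r < b)
    rw [indicator_of_notMem (notMem_Ioi.2 hrs.le), indicator_of_notMem (notMem_Ioi.2 hb.le)]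
  · filter_upwards [Iio_mem_nhds hrs] with b hb
    rw [indicator_of_mem (mem_Ioi.2 hrs), indicator_of_mem (mem_Ioi.2 hb)]

theorem norm_setIntegral_Ioi_le_add [NormedSpace ℝ X] {ν : Measure ℝ} {f : ℝ → X} {s δ ε C : ℝ}
    (hν : ν (Ioi s) ≠ ⊤) (hf : IntegrableOn f (Ioi s) ν) (hsδ : s ≤ δ) (hε : 0 ≤ ε)
    (hfε : ∀ r ∈ Ioc s δ, ‖f r‖ ≤ ε) (hfC : ∀ r ∈ Ioi δ, ‖f r‖ ≤ C) :
    ‖∫ r in Ioi s, f r ∂ν‖ ≤ ε * ν.real (Ioi s) + C * ν.real (Ioi δ) := by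
  have hIoi : Ioi δ ⊆ Ioi s := Ioi_subset_Ioi hsδ
  rw [← Ioc_union_Ioi_eq_Ioi hsδ,
    setIntegral_union (Ioc_disjoint_Ioi le_rfl) measurableSet_Ioi
      (hf.mono_set Ioc_subset_Ioi_self) (hf.mono_set hIoi), Ioc_union_Ioi_eq_Ioi hsδ]
  calc ‖∫ r in Ioc s δ, f r ∂ν + ∫ r in Ioi δ, f r ∂ν‖
      ≤ ε * ν.real (Ioc s δ) + C * ν.real (Ioi δ) :=
        norm_add_le_of_le
          (norm_setIntegral_le_of_norm_le_const (measure_lt_top_mono Ioc_subset_Ioi_self hν.lt_top)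
            hfε)
          (norm_setIntegral_le_of_norm_le_const (measure_lt_top_mono hIoi hν.lt_top) hfC)
    _ ≤ ε * ν.real (Ioi s) + C * ν.real (Ioi δ) := by
        gcongr
        exact Ioc_subset_Ioi_self

theorem integrableOn_comp_add_right {ν : Measure ℝ} {S : Set ℝ} (hS : ν S ≠ ⊤)
    (F : ℝ →ᵇ X) (h : ℝ) : IntegrableOn (fun r => F (r + h)) S ν :=
  Measure.integrableOn_of_bounded hS (F.continuous.comp (by fun_prop)).aestronglyMeasurable
    (.of_forall fun r => F.norm_coe_le_norm _)

theorem exists_boundedContinuousFunction_eqOn_Ici {f : ℝ → X} {a C : ℝ}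
    (hf : ContinuousOn f (Ici a)) (hfC : ∀ t ∈ Ici a, ‖f t‖ ≤ C) :
    ∃ F : ℝ →ᵇ X, EqOn F f (Ici a) :=
  ⟨.ofNormedAddCommGroup (fun t => f (max a t))
    (hf.comp_continuous (by fun_prop) fun t => le_max_left a t) C
    fun t => hfC _ (le_max_left a t), fun t ht => by simp [max_eq_right (mem_Ici.1 ht)]⟩

theorem continuous_eval_zeroAtInfty {E : Type*} [TopologicalSpace E] :
    Continuous fun p : C₀(E, X) × E => p.1 p.2 :=
  (continuous_eval (F := E →ᵇ X)).comp
    (ZeroAtInftyContinuousMap.isometry_toBCF.continuous.prodMap continuous_id)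

theorem continuousOn_orbit_of_bounded_semigroup {𝕜 : Type*} [NontriviallyNormedField 𝕜]
    [NormedSpace 𝕜 X] {P : ℝ → X →L[𝕜] X} {M : ℝ} {u : X}
    (hPsg : ∀ s t : ℝ, 0 ≤ s → 0 ≤ t → P (s + t) = (P s).comp (P t))
    (hPbdd : ∀ t : ℝ, 0 ≤ t → ‖P t‖ ≤ M)
    (hu : Tendsto (fun t => P t u) (𝓝[≥] 0) (𝓝 u)) :
    ContinuousOn (fun t => P t u) (Ici 0) := by
  have increment_le : ∀ a b : ℝ, 0 ≤ b → b ≤ a → ‖P a u - P b u‖ ≤ M * ‖P |a - b| u - u‖ := by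
    intro a b hb hba
    have hPa : P a u = P b (P |a - b| u) := by
      rw [abs_of_nonneg (sub_nonneg.2 hba), ← ContinuousLinearMap.comp_apply,
        ← hPsg b (a - b) hb (sub_nonneg.2 hba), add_sub_cancel]
    rw [hPa, ← map_sub]
    exact (P b).le_of_opNorm_le (hPbdd b hb) _
  intro t ht
  have abs_tendsto : Tendsto (fun s => |s - t|) (𝓝[Ici 0] t) (𝓝[≥] 0) := by
    refine tendsto_nhdsWithin_of_tendsto_nhds_of_eventually_within _ ?_
      (.of_forall fun s => mem_Ici.2 (abs_nonneg _))
    have : Continuous fun s => |s - t| := by fun_prop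
    simpa using (this.tendsto t).mono_left nhdsWithin_le_nhds
  rw [ContinuousWithinAt, tendsto_iff_norm_sub_tendsto_zero]
  refine squeeze_zero' (.of_forall fun _ => norm_nonneg _) ?_
    (by simpa using ((hu.comp abs_tendsto).sub_const u).norm.const_mul M)
  filter_upwards [self_mem_nhdsWithin] with s hs
  rcases le_total t s with hts | hst
  · exact increment_le s t ht hts
  · rw [norm_sub_rev, abs_sub_comm]
    exact increment_le t s hs hst

end Analysis

/-- `w` is a density of the potential measure of the subordinator with Lévy measure `ν`, expressed
by the renewal equation `∫₀ᵗ ν((t - h, ∞)) w(h) dh = 1` for every `t > 0`. The integral is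
`[0, ∞]`-valued, so that the equation itself contains the integrability of its integrand. -/
structure IsRenewalDensity (ν : Measure ℝ) (w : ℝ → ℝ) : Prop where
  measurable : Measurable w
  nonneg : ∀ t, 0 < t → 0 ≤ w t
  lintegral_eq_one : ∀ t, 0 < t → ∫⁻ h in Ioo 0 t, ν (Ioi (t - h)) * ENNReal.ofReal (w h) = 1

/-- The density of the position from which the subordinator jumps across level `t`. -/
noncomputable def undershootDensity (ν : Measure ℝ) (w : ℝ → ℝ) (t : ℝ) : ℝ → ℝ :=
  (Ioo 0 t).indicator fun h => w h * ν.real (Ioi (t - h))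

section Renewal

variable {X : Type*} [NormedAddCommGroup X] [NormedSpace ℝ X]

/-- The contribution of jumps across level `t` from position `h` to the mean of `F` at the
position reached by the jump. -/
noncomputable def overshootIntegrand (F : ℝ → X) (ν : Measure ℝ) (w : ℝ → ℝ) (t : ℝ) : ℝ → X :=
  (Ioo 0 t).indicator fun h => w h • ∫ r in Ioi (t - h), F (r + h) ∂ν

/-- The mean of `F` at the position `D_t` of the subordinator just after crossing level `t`. -/
noncomputable def overshootMean (F : ℝ → X) (ν : Measure ℝ) (w : ℝ → ℝ) (t : ℝ) : X :=
  ∫ h, overshootIntegrand F ν w t h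

theorem overshootIntegrand_const [CompleteSpace X] (c : X) (ν : Measure ℝ) (w : ℝ → ℝ) (t h : ℝ) :
    overshootIntegrand (fun _ => c) ν w t h = undershootDensity ν w t h • c := by
  by_cases hh : h ∈ Ioo 0 t
  · simp [overshootIntegrand, undershootDensity, indicator_of_mem hh, mul_smul]
  · simp [overshootIntegrand, undershootDensity, indicator_of_notMem hh]

namespace IsRenewalDensity

variable {ν : Measure ℝ} {w : ℝ → ℝ} {s t : ℝ}

theorem measure_Ioi_ne_top (hw : IsRenewalDensity ν w) (hs : 0 < s) : ν (Ioi s) ≠ ⊤ := by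
  intro htop
  have top_mul : ⊤ * ∫⁻ h in Ioo 0 s, ENNReal.ofReal (w h) = 1 := by
    rw [← hw.lintegral_eq_one s hs, ← lintegral_const_mul _ hw.measurable.ennreal_ofReal]
    refine setLIntegral_congr_fun measurableSet_Ioo fun h hh => ?_
    rw [measure_mono_top (Ioi_subset_Ioi (sub_le_self s hh.1.le)) htop]
  rcases eq_or_ne (∫⁻ h in Ioo 0 s, ENNReal.ofReal (w h)) 0 with h0 | h0
  · simp [h0] at top_mul
  · simp [ENNReal.top_mul h0] at top_mul

theorem exists_measure_Ioi_ne_zero (hw : IsRenewalDensity ν w) : ∃ δ > 0, ν (Ioi δ) ≠ 0 := by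
  by_contra! hν
  refine zero_ne_one ((hw.lintegral_eq_one 1 one_pos).symm.trans ?_).symm
  refine setLIntegral_eq_zero measurableSet_Ioo fun h hh => ?_
  simp [hν (1 - h) (sub_pos.2 hh.2)]

theorem exists_integrableOn_Ioo (hw : IsRenewalDensity ν w) :
    ∃ δ > 0, IntegrableOn w (Ioo 0 δ) := by
  obtain ⟨δ, hδ, hνδ⟩ := hw.exists_measure_Ioi_ne_zero
  have mul_le_one : ν (Ioi δ) * ∫⁻ h in Ioo 0 δ, ENNReal.ofReal (w h) ≤ 1 := by
    rw [← hw.lintegral_eq_one δ hδ, ← lintegral_const_mul _ hw.measurable.ennreal_ofReal]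
    refine setLIntegral_mono' measurableSet_Ioo fun h hh => ?_
    gcongr
    exact sub_le_self δ hh.1.le
  refine ⟨δ, hδ, hw.measurable.aestronglyMeasurable, ?_⟩
  rw [hasFiniteIntegral_iff_ofReal
    ((ae_restrict_mem measurableSet_Ioo).mono fun h hh => hw.nonneg h hh.1)]
  exact (ENNReal.lt_top_of_mul_ne_top_right (mul_le_one.trans_lt ENNReal.one_lt_top).ne hνδ)

theorem tendsto_setIntegral_Ioo_zero (hw : IsRenewalDensity ν w) :
    Tendsto (fun t => ∫ h in Ioo 0 t, w h) (𝓝[>] 0) (𝓝 0) := by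
  obtain ⟨δ, hδ, hint⟩ := hw.exists_integrableOn_Ioo
  have hvol : Tendsto (fun t => (volume.restrict (Ioo 0 δ)) (Ioo 0 t)) (𝓝[>] 0) (𝓝 0) := by
    have hlen : Tendsto (fun t : ℝ => volume (Ioo 0 t)) (𝓝[>] 0) (𝓝 0) := by
      simpa using (ENNReal.continuous_ofReal.tendsto 0).mono_left nhdsWithin_le_nhds
    exact tendsto_of_tendsto_of_tendsto_of_le_of_le tendsto_const_nhds hlen
      (fun _ => zero_le) fun t => Measure.restrict_apply_le _ _
  refine (hint.tendsto_setIntegral_nhds_zero hvol).congr' ?_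
  filter_upwards [nhdsWithin_le_nhds (Iio_mem_nhds hδ)] with t ht
  rw [Measure.restrict_restrict measurableSet_Ioo,
    inter_eq_left.2 (Ioo_subset_Ioo_right (le_of_lt ht))]

theorem sFinite_restrict_Ioi (hw : IsRenewalDensity ν w) : SFinite (ν.restrict (Ioi 0)) := by
  have : SigmaFinite (ν.restrict (Ioi 0)) := by
    refine Measure.sigmaFinite_of_countable
      (S := insert (Iic 0) (range fun n : ℕ => Ioi (1 / (n + 1 : ℝ))))
      ((countable_range _).insert _) ?_ ?_
    · rintro _ (rfl | ⟨n, rfl⟩)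
      · simp [Measure.restrict_apply measurableSet_Iic, Iic_inter_Ioi]
      · exact (Measure.restrict_apply_le _ _).trans_lt
          (hw.measure_Ioi_ne_top Nat.one_div_pos_of_nat).lt_top
    · refine eq_univ_of_forall fun s => ?_
      rcases le_or_gt s 0 with hs | hs
      · exact mem_sUnion_of_mem hs (mem_insert _ _)
      · obtain ⟨n, hn⟩ := exists_nat_one_div_lt hs
        exact mem_sUnion_of_mem hn (mem_insert_of_mem _ (mem_range_self n))
  infer_instance

theorem ae_measure_singleton_sub_eq_zero (hw : IsRenewalDensity ν w) (t : ℝ) :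
    ∀ᵐ h, h < t → ν {t - h} = 0 := by
  have := hw.sFinite_restrict_Ioi
  have atoms_countable : {s : ℝ | 0 < (ν.restrict (Ioi 0)) {s}}.Countable :=
    Measure.countable_meas_pos_of_disjoint_iUnion (fun s => measurableSet_singleton s)
      (fun _ _ hne => disjoint_singleton.2 hne)
  filter_upwards [(atoms_countable.preimage (sub_right_injective (b := t))).ae_notMem volume]
    with h hh hht
  simpa [Measure.restrict_apply, sub_pos.2 hht] using hh

theorem undershootDensity_nonneg (hw : IsRenewalDensity ν w) (t h : ℝ) :
    0 ≤ undershootDensity ν w t h :=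
  indicator_nonneg (fun h hh => mul_nonneg (hw.nonneg h hh.1) measureReal_nonneg) h

theorem measurable_undershootDensity (hw : IsRenewalDensity ν w) (t : ℝ) :
    Measurable (undershootDensity ν w t) := by
  have tail_measurable : Measurable fun s : ℝ => ν (Ioi s) :=
    Antitone.measurable fun _ _ hst => measure_mono (Ioi_subset_Ioi hst)
  exact (hw.measurable.mul
    (tail_measurable.ennreal_toReal.comp (measurable_const.sub measurable_id))).indicator
      measurableSet_Ioo

theorem lintegral_undershootDensity (hw : IsRenewalDensity ν w) (ht : 0 < t) :
    ∫⁻ h, ENNReal.ofReal (undershootDensity ν w t h) = 1 := by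
  rw [← hw.lintegral_eq_one t ht, ← lintegral_indicator measurableSet_Ioo]
  refine lintegral_congr fun h => ?_
  by_cases hh : h ∈ Ioo 0 t
  · rw [undershootDensity, indicator_of_mem hh, indicator_of_mem hh,
      ENNReal.ofReal_mul (hw.nonneg h hh.1),
      ofReal_measureReal (hw.measure_Ioi_ne_top (sub_pos.2 hh.2)), mul_comm]
  · simp [undershootDensity, indicator_of_notMem hh]

theorem integrable_undershootDensity (hw : IsRenewalDensity ν w) (ht : 0 < t) :
    Integrable (undershootDensity ν w t) :=
  ⟨(hw.measurable_undershootDensity t).aestronglyMeasurable, by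
    simp [hasFiniteIntegral_iff_ofReal (.of_forall (hw.undershootDensity_nonneg t)),
      hw.lintegral_undershootDensity ht]⟩

theorem integral_undershootDensity (hw : IsRenewalDensity ν w) (ht : 0 < t) :
    ∫ h, undershootDensity ν w t h = 1 := by
  rw [integral_eq_lintegral_of_nonneg_ae (.of_forall (hw.undershootDensity_nonneg t))
    (hw.measurable_undershootDensity t).aestronglyMeasurable, hw.lintegral_undershootDensity ht,
    ENNReal.toReal_one]

theorem norm_overshootIntegrand_le (hw : IsRenewalDensity ν w) (F : ℝ →ᵇ X) (t h : ℝ) :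
    ‖overshootIntegrand F ν w t h‖ ≤ ‖F‖ * undershootDensity ν w t h := by
  by_cases hh : h ∈ Ioo 0 t
  · have jump_le : ‖∫ r in Ioi (t - h), F (r + h) ∂ν‖ ≤ ‖F‖ * ν.real (Ioi (t - h)) :=
      norm_setIntegral_le_of_norm_le_const (hw.measure_Ioi_ne_top (sub_pos.2 hh.2)).lt_top
        fun r _ => F.norm_coe_le_norm _
    rw [overshootIntegrand, undershootDensity, indicator_of_mem hh, indicator_of_mem hh, norm_smul,
      Real.norm_of_nonneg (hw.nonneg h hh.1), mul_left_comm]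
    exact mul_le_mul_of_nonneg_left jump_le (hw.nonneg h hh.1)
  · simp [overshootIntegrand, undershootDensity, indicator_of_notMem hh]

theorem stronglyMeasurable_overshootIntegrand (hw : IsRenewalDensity ν w) (F : ℝ →ᵇ X) (t : ℝ) :
    StronglyMeasurable (overshootIntegrand F ν w t) := by
  have := hw.sFinite_restrict_Ioi
  let jump (h r : ℝ) : X := (Ioi (t - h)).indicator (fun r => F (r + h)) r
  have jump_measurable : StronglyMeasurable (Function.uncurry jump) :=
    (F.continuous.comp (by fun_prop : Continuous fun p : ℝ × ℝ => p.2 + p.1)).stronglyMeasurable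
      |>.indicator (measurableSet_lt (by fun_prop : Measurable fun p : ℝ × ℝ => t - p.1)
        measurable_snd)
  have integrand_eq : overshootIntegrand F ν w t =
      (Ioo 0 t).indicator fun h => w h • ∫ r in Ioi 0, jump h r ∂ν := by
    refine indicator_congr fun h hh => ?_
    simp only [jump]
    rw [setIntegral_indicator measurableSet_Ioi,
      inter_eq_right.2 (Ioi_subset_Ioi (sub_nonneg.2 hh.2.le))]
  rw [integrand_eq]
  exact (hw.measurable.stronglyMeasurable.smul jump_measurable.integral_prod_right).indicator
    measurableSet_Ioo

theorem integrable_overshootIntegrand (hw : IsRenewalDensity ν w) (F : ℝ →ᵇ X) (ht : 0 < t) :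
    Integrable (overshootIntegrand F ν w t) :=
  ((hw.integrable_undershootDensity ht).const_mul ‖F‖).mono'
    (hw.stronglyMeasurable_overshootIntegrand F t).aestronglyMeasurable
    (.of_forall (hw.norm_overshootIntegrand_le F t))

theorem ae_continuousAt_overshootIntegrand (hw : IsRenewalDensity ν w) (F : ℝ →ᵇ X) (t : ℝ) :
    ∀ᵐ h, ContinuousAt (fun t => overshootIntegrand F ν w t h) t := by
  filter_upwards [hw.ae_measure_singleton_sub_eq_zero t, Measure.ae_ne volume t] with h hatom hne
  rcases le_or_gt h 0 with h0 | h0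
  · simp [overshootIntegrand, not_lt.2 h0, continuousAt_const]
  rcases lt_or_gt_of_ne hne with hht | hth
  · have tail_continuousAt : ContinuousAt (fun t => ∫ r in Ioi (t - h), F (r + h) ∂ν) t :=
      ContinuousAt.comp (f := fun t => t - h) (g := fun s => ∫ r in Ioi s, F (r + h) ∂ν)
        (continuousAt_setIntegral_Ioi
          (integrableOn_comp_add_right (hw.measure_Ioi_ne_top (half_pos (sub_pos.2 hht))) F h)
          (half_lt_self (sub_pos.2 hht)) (hatom hht))
        (by fun_prop)
    refine (tail_continuousAt.const_smul (w h)).congr ?_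
    filter_upwards [Ioi_mem_nhds hht] with t ht
    simp [overshootIntegrand, h0, mem_Ioi.1 ht]
  · refine (continuousAt_const (y := 0)).congr ?_
    filter_upwards [Iio_mem_nhds hth] with t ht
    rw [overshootIntegrand, indicator_of_notMem fun hh => lt_asymm hh.2 ht]

theorem ae_continuousAt_undershootDensity (hw : IsRenewalDensity ν w) (t : ℝ) :
    ∀ᵐ h, ContinuousAt (fun t => undershootDensity ν w t h) t := by
  filter_upwards [hw.ae_continuousAt_overshootIntegrand (.const ℝ (1 : ℝ)) t] with h hh
  exact hh.congr (.of_forall fun t => by simp [overshootIntegrand_const])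

theorem continuousAt_overshootMean (hw : IsRenewalDensity ν w) (F : ℝ →ᵇ X) (ht : 0 < t) :
    ContinuousAt (overshootMean F ν w) t := by
  have density_integrable : ∀ {s}, 0 < s → Integrable fun h => ‖F‖ * undershootDensity ν w s h :=
    fun hs => (hw.integrable_undershootDensity hs).const_mul ‖F‖
  refine tendsto_integral_of_tendsto_integral_bound
    (g := fun s h => ‖F‖ * undershootDensity ν w s h)
    (.of_forall fun s => (hw.stronglyMeasurable_overshootIntegrand F s).aestronglyMeasurable)
    (hw.stronglyMeasurable_overshootIntegrand F t).aestronglyMeasurable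
    (eventually_gt_nhds ht |>.mono fun s hs => density_integrable hs) (density_integrable ht)
    (.of_forall fun s => .of_forall (hw.norm_overshootIntegrand_le F s))
    (.of_forall (hw.norm_overshootIntegrand_le F t))
    (hw.ae_continuousAt_overshootIntegrand F t)
    ((hw.ae_continuousAt_undershootDensity t).mono fun h hh => hh.tendsto.const_mul ‖F‖)
    (tendsto_const_nhds.congr' ?_)
  filter_upwards [Ioi_mem_nhds ht] with s hs
  simp only [integral_const_mul, hw.integral_undershootDensity ht, hw.integral_undershootDensity hs]

theorem overshootMean_sub (hw : IsRenewalDensity ν w) (F G : ℝ →ᵇ X) (ht : 0 < t) :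
    overshootMean (F - G) ν w t = overshootMean F ν w t - overshootMean G ν w t := by
  unfold overshootMean
  rw [← integral_sub (hw.integrable_overshootIntegrand F ht)
    (hw.integrable_overshootIntegrand G ht)]
  congr with h
  by_cases hh : h ∈ Ioo 0 t
  · have hν := hw.measure_Ioi_ne_top (sub_pos.2 hh.2)
    simp only [overshootIntegrand, indicator_of_mem hh, BoundedContinuousFunction.sub_apply]
    rw [integral_sub (integrableOn_comp_add_right hν F h) (integrableOn_comp_add_right hν G h),
      smul_sub]
  · simp only [overshootIntegrand, indicator_of_notMem hh, sub_zero]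

theorem overshootMean_const [CompleteSpace X] (hw : IsRenewalDensity ν w) (c : X) (ht : 0 < t) :
    overshootMean (fun _ => c) ν w t = c := by
  simp only [overshootMean, overshootIntegrand_const, integral_smul_const,
    hw.integral_undershootDensity ht, one_smul]

theorem norm_overshootMean_le_add (hw : IsRenewalDensity ν w) (F : ℝ →ᵇ X) {δ ε : ℝ} (ht : 0 < t)
    (hwt : IntegrableOn w (Ioo 0 t)) (htδ : t ≤ δ) (hε : 0 ≤ ε)
    (hF : ∀ r ∈ Ioc 0 (δ + t), ‖F r‖ ≤ ε) :
    ‖overshootMean F ν w t‖ ≤ ε + ‖F‖ * ν.real (Ioi δ) * ∫ h in Ioo 0 t, w h := by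
  have integrand_le : ∀ h, ‖overshootIntegrand F ν w t h‖ ≤
      ε * undershootDensity ν w t h + ‖F‖ * ν.real (Ioi δ) * (Ioo 0 t).indicator w h := by
    intro h
    by_cases hh : h ∈ Ioo 0 t
    · have hν := hw.measure_Ioi_ne_top (sub_pos.2 hh.2)
      have jump_le : ‖∫ r in Ioi (t - h), F (r + h) ∂ν‖ ≤
          ε * ν.real (Ioi (t - h)) + ‖F‖ * ν.real (Ioi δ) :=
        norm_setIntegral_Ioi_le_add hν (integrableOn_comp_add_right hν F h)
          (by linarith [hh.1]) hε
          (fun r hr => hF _ ⟨by linarith [hr.1], by linarith [hr.2, hh.2]⟩)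
          fun r _ => F.norm_coe_le_norm _
      simp only [overshootIntegrand, undershootDensity, indicator_of_mem hh, norm_smul,
        Real.norm_of_nonneg (hw.nonneg h hh.1)]
      linarith [mul_le_mul_of_nonneg_left jump_le (hw.nonneg h hh.1)]
    · simp [overshootIntegrand, undershootDensity, indicator_of_notMem hh]
  have density_int : Integrable fun h => ε * undershootDensity ν w t h :=
    (hw.integrable_undershootDensity ht).const_mul ε
  have jump_int : Integrable fun h => ‖F‖ * ν.real (Ioi δ) * (Ioo 0 t).indicator w h :=
    (hwt.integrable_indicator measurableSet_Ioo).const_mul _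
  calc ‖overshootMean F ν w t‖
      ≤ ∫ h, (ε * undershootDensity ν w t h + ‖F‖ * ν.real (Ioi δ) * (Ioo 0 t).indicator w h) :=
        norm_integral_le_of_norm_le (density_int.add jump_int) (.of_forall integrand_le)
    _ = ε + ‖F‖ * ν.real (Ioi δ) * ∫ h in Ioo 0 t, w h := by
        rw [integral_add density_int jump_int, integral_const_mul, integral_const_mul,
          hw.integral_undershootDensity ht, mul_one, integral_indicator measurableSet_Ioo]

theorem tendsto_overshootMean_zero_of_apply_zero (hw : IsRenewalDensity ν w) {F : ℝ →ᵇ X}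
    (hF0 : F 0 = 0) : Tendsto (overshootMean F ν w) (𝓝[>] 0) (𝓝 0) := by
  obtain ⟨t₀, ht₀, hw_int⟩ := hw.exists_integrableOn_Ioo
  rw [Metric.tendsto_nhds]
  intro η hη
  obtain ⟨δ, hδ, hFδ⟩ := Metric.continuousAt_iff.1 F.continuous.continuousAt (η / 2) (half_pos hη)
  have jumps_small := (hw.tendsto_setIntegral_Ioo_zero.const_mul
    (‖F‖ * ν.real (Ioi (δ / 2)))).eventually_lt_const ((mul_zero _).trans_lt (half_pos hη))
  filter_upwards [jumps_small, self_mem_nhdsWithin,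
    nhdsWithin_le_nhds (Iio_mem_nhds ht₀), nhdsWithin_le_nhds (Iio_mem_nhds (half_pos hδ))]
    with t hjumps ht (htt₀ : t < t₀) (htδ : t < δ / 2)
  rw [dist_zero_right]
  refine (hw.norm_overshootMean_le_add F ht (hw_int.mono_set (Ioo_subset_Ioo_right htt₀.le)) htδ.le
    (half_pos hη).le fun r hr => ?_).trans_lt (by linarith)
  have hr_dist : dist r 0 < δ := by
    rw [Real.dist_0_eq_abs, abs_of_pos hr.1]
    linarith [hr.2]
  simpa [hF0] using (hFδ hr_dist).le

theorem tendsto_overshootMean_zero [CompleteSpace X] (hw : IsRenewalDensity ν w) (F : ℝ →ᵇ X) :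
    Tendsto (overshootMean F ν w) (𝓝[>] 0) (𝓝 (F 0)) := by
  let c : ℝ →ᵇ X := BoundedContinuousFunction.const ℝ (F 0)
  have centred : Tendsto (overshootMean (F - c : ℝ →ᵇ X) ν w) (𝓝[>] 0) (𝓝 0) :=
    hw.tendsto_overshootMean_zero_of_apply_zero (sub_self (F 0))
  rw [← zero_add (F 0)]
  refine (centred.add_const (F 0)).congr' ?_
  filter_upwards [self_mem_nhdsWithin] with t ht
  have mean_c : overshootMean c ν w t = F 0 := hw.overshootMean_const (F 0) ht
  rw [hw.overshootMean_sub F c ht, mean_c, sub_add_cancel]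

theorem continuousOn_overshootMean [CompleteSpace X] (hw : IsRenewalDensity ν w) (F : ℝ →ᵇ X) :
    ContinuousOn (fun t => if t = 0 then F 0 else overshootMean F ν w t) (Ici 0) := by
  intro t ht
  rcases eq_or_lt_of_le (mem_Ici.1 ht) with rfl | ht
  · rw [← continuousWithinAt_Ioi_iff_Ici, ContinuousWithinAt, if_pos rfl]
    refine (hw.tendsto_overshootMean_zero F).congr' ?_
    filter_upwards [self_mem_nhdsWithin] with t ht using (if_neg (ne_of_gt ht)).symm
  · refine ((hw.continuousAt_overshootMean F ht).congr ?_).continuousWithinAt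
    filter_upwards [Ioi_mem_nhds ht] with t ht using (if_neg (ne_of_gt ht)).symm

end IsRenewalDensity

end Renewal

theorem cand_eqOn_overshootMean {E : Type*} [TopologicalSpace E]
    {P : ℝ → C₀(E, ℝ) →L[ℝ] C₀(E, ℝ)} {F : ℝ → C₀(E, ℝ)} {u : C₀(E, ℝ)} (ν : Measure ℝ)
    (w : ℝ → ℝ) (hF0 : F 0 = u) (hF : EqOn F (fun t => P t u) (Ici 0)) :
    EqOn (cand P ν w u) (fun t => if t = 0 then F 0 else overshootMean F ν w t) (Ici 0) := by
  intro t _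
  simp only [cand, overshootMean, overshootIntegrand, hF0, integral_indicator measurableSet_Ioo]
  congr 1
  refine setIntegral_congr_fun measurableSet_Ioo fun h hh => ?_
  refine congrArg (w h • ·) (setIntegral_congr_fun measurableSet_Ioi fun r hr => ?_)
  exact (hF (mem_Ici.2 (by linarith [mem_Ioi.1 hr, hh.1, hh.2]))).symm

theorem ctrw_overshoot_joint_continuity_general {E : Type*} [TopologicalSpace E]
    {P : ℝ → C₀(E, ℝ) →L[ℝ] C₀(E, ℝ)} {M : ℝ}
    (hPsg : ∀ s t : ℝ, 0 ≤ s → 0 ≤ t → P (s + t) = (P s).comp (P t))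
    (hPbdd : ∀ t : ℝ, 0 ≤ t → ‖P t‖ ≤ M)
    {ν : Measure ℝ} {uφ : ℝ → ℝ} (huφ : IsRenewalDensity ν uφ) {u : C₀(E, ℝ)}
    (hu : Tendsto (fun t => P t u) (𝓝[≥] 0) (𝓝 u)) :
    ContinuousOn (fun q : E × ℝ => (cand P ν uφ u q.2) q.1) {q : E × ℝ | 0 ≤ q.2} := by
  have hP0u : P 0 u = u := tendsto_nhds_unique (tendsto_pure_nhds (fun t => P t u) 0)
    (hu.mono_left (pure_le_nhdsWithin self_mem_Ici))
  obtain ⟨F, hF⟩ := exists_boundedContinuousFunction_eqOn_Ici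
    (continuousOn_orbit_of_bounded_semigroup hPsg hPbdd hu)
    fun t ht => (P t).le_of_opNorm_le (hPbdd t ht) u
  have cand_continuousOn : ContinuousOn (cand P ν uφ u) (Ici 0) :=
    (huφ.continuousOn_overshootMean F).congr
      (cand_eqOn_overshootMean ν uφ ((hF self_mem_Ici).trans hP0u) hF)
  exact continuous_eval_zeroAtInfty.comp_continuousOn
    ((cand_continuousOn.comp continuousOn_snd fun _ hq => hq).prodMk continuousOn_fst)

/-- Regularity of the candidate solution: for every `u ∈ D(G)` the map
`(x,t) ↦ Q(t)(x)` is jointly continuous on `E × [0,∞)`. -/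
theorem ctrw_overshoot_joint_continuity
    {E : Type*} [MetricSpace E] [TopologicalSpace.SeparableSpace E] [LocallyCompactSpace E]
    (P : ℝ → C₀(E, ℝ) →L[ℝ] C₀(E, ℝ))
    (hP0 : P 0 = ContinuousLinearMap.id ℝ C₀(E, ℝ))
    (hPsg : ∀ s t : ℝ, 0 ≤ s → 0 ≤ t → P (s + t) = (P s).comp (P t))
    (hPpos : ∀ t : ℝ, 0 ≤ t → ∀ f : C₀(E, ℝ), (∀ x, 0 ≤ f x) → ∀ x, 0 ≤ P t f x)
    (hPcon : ∀ t : ℝ, 0 ≤ t → ∀ f : C₀(E, ℝ), ‖P t f‖ ≤ ‖f‖)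
    (hPsc : ∀ f : C₀(E, ℝ), Tendsto (fun t => P t f) (𝓝[≥] (0 : ℝ)) (𝓝 f))
    (ν : Measure ℝ)
    (hν1 : ∫⁻ s in Set.Ioi (0 : ℝ), ENNReal.ofReal (min 1 s) ∂ν ≠ ⊤)
    (hνinf : ν (Set.Ioi (0 : ℝ)) = ⊤)
    (hνpos : ∀ t : ℝ, 0 < t → 0 < ν (Set.Ioi t))
    (uφ : ℝ → ℝ) (huφm : Measurable uφ)
    (huφ0 : ∀ t : ℝ, 0 < t → 0 ≤ uφ t)
    (huφmono : ∀ s t : ℝ, 0 < s → s ≤ t → uφ t ≤ uφ s)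
    (hrenew : ∀ t : ℝ, 0 < t →
      ∫⁻ h in Set.Ioo 0 t, ν (Set.Ioi (t - h)) * ENNReal.ofReal (uφ h) = 1)
    (hlog : ∫⁻ t in Set.Ioo (0 : ℝ) 1, ENNReal.ofReal (|Real.log t| * uφ t) ≠ ⊤)
    (u Gu : C₀(E, ℝ))
    (hu : Tendsto (fun h : ℝ => h⁻¹ • (P h u - u)) (𝓝[>] (0 : ℝ)) (𝓝 Gu)) :
    ContinuousOn (fun q : E × ℝ => (cand P ν uφ u q.2) q.1) {q : E × ℝ | 0 ≤ q.2} := by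
  exact ctrw_overshoot_joint_continuity_general hPsg
    (fun t ht => (P t).opNorm_le_bound zero_le_one fun f =>
      (hPcon t ht f).trans_eq (one_mul _).symm)
    ⟨huφm, huφ0, hrenew⟩ (hPsc u)
end

section
/- Auxiliary lemma, part (c): for every u in D(G) and every x in E, the function t ↦ Q(t)(x) is absolutely continuous on every compact subinterval of [0,∞), and there exists a constant C > 0, depending only on ν and u^φ, such that for almost every t > 0, sup_{x∈E} |∂_t Q(t)(x)| ≤ C (‖u‖∞ + ‖Gu‖∞) u^φ(t). -/
open MeasureTheory Set Filter Topology
open scoped ZeroAtInfty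

/-!
Let `D` be the driftless subordinator with Lévy measure `ν`, whose potential measure has density
`w`. It jumps from `h` with a size in `dr` at the rate `w h dh ν(dr)`, and the renewal identity says
that this measure gives mass one to the jumps passing over a fixed level: every level is crossed
exactly once. With `q s = P s u`, whose derivative is `P s Gu`, `Q(t)` is the mean of
`q` at the first passage of `D` over `t`, and summing the increments of `q` over all jumps started
below `t` gives Dynkin's formula
`Q(t) = u + ∫₀ᵗ w h • ∫ (q (r + h) - q h) ν(dr) dh`.
Since `q` is bounded by `‖u‖` and `‖Gu‖`-Lipschitz, its increments over a jump of size `r` are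
`O(min 1 r)`, so the inner integral is bounded uniformly in `h`.
-/

section ContractionSemigroup

variable {X : Type*} [NormedAddCommGroup X] [NormedSpace ℝ X]

/-- `P` restricted to `[0, ∞)` is a strongly continuous contraction semigroup on `X`; the values at
negative times are irrelevant. -/
structure IsContractionSemigroup (P : ℝ → X →L[ℝ] X) : Prop where
  zero : P 0 = ContinuousLinearMap.id ℝ X
  add : ∀ s t : ℝ, 0 ≤ s → 0 ≤ t → P (s + t) = (P s).comp (P t)
  norm_le : ∀ t : ℝ, 0 ≤ t → ∀ f : X, ‖P t f‖ ≤ ‖f‖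
  tendsto : ∀ f : X, Tendsto (fun t => P t f) (𝓝[≥] (0 : ℝ)) (𝓝 f)

/-- `u` lies in the domain of the generator of `P`, which maps it to `v`. -/
def HasGeneratorAt (P : ℝ → X →L[ℝ] X) (u v : X) : Prop :=
  Tendsto (fun h : ℝ => h⁻¹ • (P h u - u)) (𝓝[>] (0 : ℝ)) (𝓝 v)

/-- The orbit `s ↦ P s u` of a semigroup, extended to negative times by its value at `0` so that it
is continuous on all of `ℝ`. -/
def orbit (P : ℝ → X →L[ℝ] X) (u : X) (s : ℝ) : X := P (max s 0) u

namespace IsContractionSemigroup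

variable {P : ℝ → X →L[ℝ] X}

lemma apply_eq_apply_sub (hP : IsContractionSemigroup P) {a b : ℝ} (ha : 0 ≤ a) (hab : a ≤ b)
    (f : X) : P b f = P a (P (b - a) f) := by
  simpa using DFunLike.congr_fun (hP.add a (b - a) ha (sub_nonneg.2 hab)) f

lemma orbit_zero (hP : IsContractionSemigroup P) (u : X) : orbit P u 0 = u := by
  simp [orbit, hP.zero]

lemma norm_orbit_le (hP : IsContractionSemigroup P) (u : X) (s : ℝ) : ‖orbit P u s‖ ≤ ‖u‖ :=
  hP.norm_le _ (le_max_right _ _) u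

lemma norm_apply_sub_apply_le (hP : IsContractionSemigroup P) {a b : ℝ} (ha : 0 ≤ a) (hb : 0 ≤ b)
    (f : X) : ‖P b f - P a f‖ ≤ ‖P |b - a| f - f‖ := by
  wlog hab : a ≤ b generalizing a b
  · rw [norm_sub_rev, abs_sub_comm]
    exact this hb ha (le_of_not_ge hab)
  rw [abs_of_nonneg (sub_nonneg.2 hab), hP.apply_eq_apply_sub ha hab, ← map_sub]
  exact hP.norm_le a ha _

lemma continuous_orbit (hP : IsContractionSemigroup P) (u : X) : Continuous (orbit P u) := by
  refine continuous_iff_continuousAt.2 fun s => tendsto_iff_norm_sub_tendsto_zero.2 ?_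
  have hdist : Tendsto (fun r : ℝ => |max r 0 - max s 0|) (𝓝 s) (𝓝[≥] 0) := by
    refine tendsto_nhdsWithin_iff.2 ⟨?_, .of_forall fun r => mem_Ici.2 (abs_nonneg _)⟩
    exact Continuous.tendsto' (by fun_prop) _ _ (by simp)
  exact squeeze_zero (fun _ => norm_nonneg _)
    (fun r => hP.norm_apply_sub_apply_le (le_max_right _ _) (le_max_right _ _) u)
    ((tendsto_iff_norm_sub_tendsto_zero.1 (hP.tendsto u)).comp hdist)

lemma hasDerivWithinAt_orbit (hP : IsContractionSemigroup P) {u v : X}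
    (huv : HasGeneratorAt P u v) {s : ℝ} (hs : 0 ≤ s) :
    HasDerivWithinAt (orbit P u) (orbit P v s) (Ioi s) s := by
  rw [hasDerivWithinAt_iff_tendsto_slope' (by simp)]
  have hshift : Tendsto (fun r : ℝ => r - s) (𝓝[>] s) (𝓝[>] 0) := by
    refine tendsto_nhdsWithin_iff.2 ⟨?_, ?_⟩
    · exact (Continuous.tendsto' (by fun_prop) _ _ (by simp)).mono_left nhdsWithin_le_nhds
    · filter_upwards [self_mem_nhdsWithin] with r hr using mem_Ioi.2 (sub_pos.2 (mem_Ioi.1 hr))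
  refine (((P (max s 0)).continuous.tendsto v).comp (huv.comp hshift)).congr' ?_
  filter_upwards [self_mem_nhdsWithin] with r hr
  have hsr : s ≤ r := le_of_lt hr
  simp only [Function.comp_apply, slope_def_module, orbit, max_eq_left hs,
    max_eq_left (hs.trans hsr), hP.apply_eq_apply_sub hs hsr, map_smul, map_sub]

variable [CompleteSpace X]

lemma orbit_sub_orbit_eq_integral (hP : IsContractionSemigroup P) {u v : X}
    (huv : HasGeneratorAt P u v) {a b : ℝ} (ha : 0 ≤ a) (hab : a ≤ b) :
    orbit P u b - orbit P u a = ∫ s in a..b, orbit P v s := by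
  refine (intervalIntegral.integral_eq_sub_of_hasDeriv_right (hP.continuous_orbit u).continuousOn
    (fun s hs => hP.hasDerivWithinAt_orbit huv ?_)
    ((hP.continuous_orbit v).intervalIntegrable _ _)).symm
  rw [min_eq_left hab] at hs
  exact ha.trans hs.1.le

lemma norm_orbit_sub_orbit_le (hP : IsContractionSemigroup P) {u v : X}
    (huv : HasGeneratorAt P u v) {a b : ℝ} (ha : 0 ≤ a) (hab : a ≤ b) :
    ‖orbit P u b - orbit P u a‖ ≤ ‖v‖ * (b - a) := by
  rw [hP.orbit_sub_orbit_eq_integral huv ha hab, ← abs_of_nonneg (sub_nonneg.2 hab)]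
  exact intervalIntegral.norm_integral_le_of_norm_le_const fun s _ => hP.norm_orbit_le v s

end IsContractionSemigroup

end ContractionSemigroup

section JumpMeasure

/-- `w` is the density of the potential measure of a subordinator with Lévy measure `ν`, as
characterized by the renewal identity `∫₀ᵗ ν((t - h, ∞)) w(h) dh = 1`. -/
structure IsPotentialDensity (ν : Measure ℝ) (w : ℝ → ℝ) : Prop where
  measurable : Measurable w
  nonneg : ∀ t : ℝ, 0 < t → 0 ≤ w t
  lintegral_eq_one : ∀ t : ℝ, 0 < t →
    ∫⁻ h in Ioo 0 t, ν (Ioi (t - h)) * ENNReal.ofReal (w h) = 1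

/-- The measure `w(h) dh ⊗ ν(dr)` on `(0, t) × (0, ∞)`: the expected number of jumps of size `r`
which the subordinator performs from the position `h` below `t`. -/
noncomputable def jumpMeasure (ν : Measure ℝ) (w : ℝ → ℝ) (t : ℝ) : Measure (ℝ × ℝ) :=
  ((volume.restrict (Ioo 0 t)).withDensity fun h => ENNReal.ofReal (w h)).prod
    (ν.restrict (Ioi 0))

/-- The pairs `(h, r)` such that a jump of size `r` from the position `h` passes over `s`. -/
def crossing (s : ℝ) : Set (ℝ × ℝ) := {p | p.1 < s ∧ s < p.2 + p.1}

lemma measurableSet_setOf_mem_crossing :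
    MeasurableSet {z : (ℝ × ℝ) × ℝ | z.1 ∈ crossing z.2} := by
  simp only [crossing, mem_ofPred_eq]
  measurability

lemma measurableSet_crossing (s : ℝ) : MeasurableSet (crossing s) :=
  measurableSet_setOf_mem_crossing.preimage (by fun_prop : Measurable fun p : ℝ × ℝ => (p, s))

lemma preimage_prodMk_crossing {h s : ℝ} (hs : h < s) :
    Prod.mk h ⁻¹' crossing s = Ioi (s - h) := by
  ext r
  simp [crossing, hs, sub_lt_iff_lt_add]

lemma preimage_prodMk_crossing_of_le {h s : ℝ} (hs : s ≤ h) : Prod.mk h ⁻¹' crossing s = ∅ := by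
  ext r
  simp [crossing, hs.not_gt]

variable {X : Type*} [NormedAddCommGroup X] {ν : Measure ℝ} {w : ℝ → ℝ} {s t : ℝ}

lemma setIntegral_indicator_crossing [NormedSpace ℝ X] (k : ℝ → X) {h r : ℝ}
    (hh : h ∈ Ioo 0 t) (hr : 0 < r) :
    ∫ s in Ioo 0 t, (crossing s).indicator (fun _ => k s) (h, r) =
      ∫ s in h..min (r + h) t, k s := by
  have hindicator : (fun s => (crossing s).indicator (fun _ => k s) (h, r)) =
      (Ioo h (r + h)).indicator k := by
    ext s
    rfl
  rw [hindicator, setIntegral_indicator measurableSet_Ioo, Ioo_inter_Ioo, max_eq_right hh.1.le,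
    min_comm, intervalIntegral.integral_of_le (le_min (by linarith) hh.2.le),
    integral_Ioc_eq_integral_Ioo]

lemma ae_jumpMeasure : ∀ᵐ p ∂jumpMeasure ν w t, p.1 ∈ Ioo 0 t ∧ 0 < p.2 :=
  (Measure.quasiMeasurePreserving_fst.ae
    ((withDensity_absolutelyContinuous _ _).ae_le (ae_restrict_mem measurableSet_Ioo))).and
  (Measure.quasiMeasurePreserving_snd.ae (ae_restrict_mem measurableSet_Ioi))

lemma stopped_increment_ae_eq [NormedSpace ℝ X] {q k : ℝ → X}
    (hqk : ∀ ⦃a b : ℝ⦄, 0 ≤ a → a ≤ b → b ≤ t → q b - q a = ∫ s in a..b, k s) :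
    (fun p => q (min (p.2 + p.1) t) - q p.1) =ᵐ[jumpMeasure ν w t]
      fun p => ∫ s in Ioo 0 t, (crossing s).indicator (fun _ => k s) p := by
  filter_upwards [ae_jumpMeasure] with p ⟨hh, hr⟩
  rw [setIntegral_indicator_crossing k hh hr,
    hqk hh.1.le (le_min (by linarith) hh.2.le) (min_le_right _ _)]

lemma increment_ae_eq_overshoot_add_stopped (q : ℝ → X) :
    (fun p => q (p.2 + p.1) - q p.1) =ᵐ[jumpMeasure ν w t] fun p =>
      (crossing t).indicator (fun p => q (p.2 + p.1) - q t) p +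
        (q (min (p.2 + p.1) t) - q p.1) := by
  filter_upwards [ae_jumpMeasure] with p ⟨hh, _⟩
  rcases lt_or_ge t (p.2 + p.1) with hp | hp
  · rw [indicator_of_mem (show p ∈ crossing t from ⟨hh.2, hp⟩), min_eq_right hp.le,
      sub_add_sub_cancel]
  · rw [indicator_of_notMem (fun hmem : p ∈ crossing t => hp.not_gt hmem.2), min_eq_left hp,
      zero_add]

variable [SFinite (ν.restrict (Ioi 0))]

instance : SFinite (jumpMeasure ν w t) := by
  unfold jumpMeasure
  infer_instance

namespace IsPotentialDensity

lemma jumpMeasure_crossing (hw : IsPotentialDensity ν w) (hs : 0 < s) (hst : s ≤ t) :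
    jumpMeasure ν w t (crossing s) = 1 := by
  have hslice : ∀ h, ν.restrict (Ioi 0) (Prod.mk h ⁻¹' crossing s) * ENNReal.ofReal (w h) =
      (Iio s).indicator (fun h => ν (Ioi (s - h)) * ENNReal.ofReal (w h)) h := by
    intro h
    rcases lt_or_ge h s with hhs | hsh
    · rw [preimage_prodMk_crossing hhs, indicator_of_mem (mem_Iio.2 hhs),
        Measure.restrict_apply measurableSet_Ioi,
        inter_eq_left.2 (Ioi_subset_Ioi (sub_nonneg.2 hhs.le))]
    · rw [preimage_prodMk_crossing_of_le hsh, indicator_of_notMem (notMem_Iio.2 hsh),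
        measure_empty, zero_mul]
  calc jumpMeasure ν w t (crossing s)
    _ = ∫⁻ h in Ioo 0 t,
          ν.restrict (Ioi 0) (Prod.mk h ⁻¹' crossing s) * ENNReal.ofReal (w h) := by
      rw [jumpMeasure, Measure.prod_apply (measurableSet_crossing s),
        lintegral_withDensity_eq_lintegral_mul _ hw.measurable.ennreal_ofReal
          (measurable_measure_prodMk_left (measurableSet_crossing s))]
      simp only [Pi.mul_apply, mul_comm]
    _ = ∫⁻ h in Ioo 0 s, ν (Ioi (s - h)) * ENNReal.ofReal (w h) := by
      simp only [hslice]
      rw [setLIntegral_indicator measurableSet_Iio, inter_comm, Ioo_inter_Iio, min_eq_right hst]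
    _ = 1 := hw.lintegral_eq_one s hs

lemma integrable_indicator_crossing (hw : IsPotentialDensity ν w) {k : ℝ → X}
    (hk : IntegrableOn k (Ioo 0 t)) :
    Integrable (fun z : (ℝ × ℝ) × ℝ => (crossing z.2).indicator (fun _ => k z.2) z.1)
      ((jumpMeasure ν w t).prod (volume.restrict (Ioo 0 t))) := by
  have hmeas : AEStronglyMeasurable
      (fun z : (ℝ × ℝ) × ℝ => (crossing z.2).indicator (fun _ => k z.2) z.1)
      ((jumpMeasure ν w t).prod (volume.restrict (Ioo 0 t))) :=
    hk.aestronglyMeasurable.comp_snd.indicator measurableSet_setOf_mem_crossing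
  refine (integrable_prod_iff' hmeas).2 ⟨?_, hk.norm.congr ?_⟩ <;>
    filter_upwards [ae_restrict_mem measurableSet_Ioo] with s hs
  · refine (integrable_indicator_iff (measurableSet_crossing s)).2 (integrableOn_const ?_)
    simp [hw.jumpMeasure_crossing hs.1 hs.2.le]
  · simp only [norm_indicator_eq_indicator_norm]
    simp [integral_indicator_const _ (measurableSet_crossing s), measureReal_def,
      hw.jumpMeasure_crossing hs.1 hs.2.le]

lemma integrable_overshoot (hw : IsPotentialDensity ν w) (ht : 0 < t) {q : ℝ → X}
    (hq : IntegrableOn (fun p => q (p.2 + p.1)) (crossing t) (jumpMeasure ν w t)) :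
    Integrable ((crossing t).indicator fun p => q (p.2 + p.1) - q t) (jumpMeasure ν w t) :=
  (hq.sub (integrableOn_const (by simp [hw.jumpMeasure_crossing ht le_rfl]))).integrable_indicator
    (measurableSet_crossing t)

variable [NormedSpace ℝ X]

lemma integrable_jumpMeasure (hw : IsPotentialDensity ν w) {f : ℝ × ℝ → X}
    (hf : Integrable f (jumpMeasure ν w t)) :
    IntegrableOn (fun h => w h • ∫ r in Ioi 0, f (h, r) ∂ν) (Ioo 0 t) := by
  refine ((integrable_withDensity_iff_integrable_smul' hw.measurable.ennreal_ofReal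
    (.of_forall fun _ => ENNReal.ofReal_lt_top)).1 hf.integral_prod_left).congr ?_
  filter_upwards [ae_restrict_mem measurableSet_Ioo] with h hh
  rw [ENNReal.toReal_ofReal (hw.nonneg h hh.1)]

lemma integral_jumpMeasure (hw : IsPotentialDensity ν w) {f : ℝ × ℝ → X}
    (hf : Integrable f (jumpMeasure ν w t)) :
    ∫ p, f p ∂jumpMeasure ν w t = ∫ h in Ioo 0 t, w h • ∫ r in Ioi 0, f (h, r) ∂ν := by
  rw [jumpMeasure, integral_prod _ hf, integral_withDensity_eq_integral_toReal_smul
    hw.measurable.ennreal_ofReal (.of_forall fun _ => ENNReal.ofReal_lt_top)]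
  refine setIntegral_congr_fun measurableSet_Ioo fun h hh => ?_
  simp only [ENNReal.toReal_ofReal (hw.nonneg h hh.1)]

lemma setIntegral_crossing_jumpMeasure (hw : IsPotentialDensity ν w) {f : ℝ × ℝ → X}
    (hf : IntegrableOn f (crossing t) (jumpMeasure ν w t)) :
    ∫ p in crossing t, f p ∂jumpMeasure ν w t =
      ∫ h in Ioo 0 t, w h • ∫ r in Ioi (t - h), f (h, r) ∂ν := by
  rw [← integral_indicator (measurableSet_crossing t),
    hw.integral_jumpMeasure (hf.integrable_indicator (measurableSet_crossing t))]
  refine setIntegral_congr_fun measurableSet_Ioo fun h hh => ?_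
  have hslice : (fun r => (crossing t).indicator f (h, r)) =
      (Ioi (t - h)).indicator fun r => f (h, r) := by
    rw [← preimage_prodMk_crossing hh.2]
    rfl
  simp only [hslice]
  rw [setIntegral_indicator measurableSet_Ioi,
    inter_eq_right.2 (Ioi_subset_Ioi (sub_nonneg.2 hh.2.le))]

lemma integral_overshoot [CompleteSpace X] (hw : IsPotentialDensity ν w) (ht : 0 < t) {q : ℝ → X}
    (hq : IntegrableOn (fun p => q (p.2 + p.1)) (crossing t) (jumpMeasure ν w t)) :
    ∫ p, (crossing t).indicator (fun p => q (p.2 + p.1) - q t) p ∂jumpMeasure ν w t =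
      (∫ p in crossing t, q (p.2 + p.1) ∂jumpMeasure ν w t) - q t := by
  have hmass : jumpMeasure ν w t (crossing t) = 1 := hw.jumpMeasure_crossing ht le_rfl
  rw [integral_indicator (measurableSet_crossing t),
    integral_sub hq (integrableOn_const (by simp [hmass])), setIntegral_const, measureReal_def,
    hmass, ENNReal.toReal_one, one_smul]

variable {q k : ℝ → X}

lemma integrable_stopped_increment (hw : IsPotentialDensity ν w) (hk : IntegrableOn k (Ioo 0 t))
    (hqk : ∀ ⦃a b : ℝ⦄, 0 ≤ a → a ≤ b → b ≤ t → q b - q a = ∫ s in a..b, k s) :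
    Integrable (fun p => q (min (p.2 + p.1) t) - q p.1) (jumpMeasure ν w t) :=
  (hw.integrable_indicator_crossing hk).integral_prod_left.congr
    (stopped_increment_ae_eq hqk).symm

-- Fubini for the measure of jumps against `k ds`, each level `s` being crossed exactly once.
lemma integral_stopped_increment [CompleteSpace X] (hw : IsPotentialDensity ν w) (ht : 0 ≤ t)
    (hk : IntegrableOn k (Ioo 0 t))
    (hqk : ∀ ⦃a b : ℝ⦄, 0 ≤ a → a ≤ b → b ≤ t → q b - q a = ∫ s in a..b, k s) :
    ∫ p, (q (min (p.2 + p.1) t) - q p.1) ∂jumpMeasure ν w t = q t - q 0 :=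
  calc ∫ p, (q (min (p.2 + p.1) t) - q p.1) ∂jumpMeasure ν w t
    _ = ∫ s in Ioo 0 t, ∫ p, (crossing s).indicator (fun _ => k s) p ∂jumpMeasure ν w t := by
      rw [integral_congr_ae (stopped_increment_ae_eq hqk),
        integral_integral_swap (hw.integrable_indicator_crossing hk)]
    _ = ∫ s in Ioo 0 t, k s := by
      refine setIntegral_congr_fun measurableSet_Ioo fun s hs => ?_
      simp [integral_indicator_const _ (measurableSet_crossing s), measureReal_def,
        hw.jumpMeasure_crossing hs.1 hs.2.le]
    _ = q t - q 0 := by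
      rw [hqk le_rfl ht le_rfl, intervalIntegral.integral_of_le ht, integral_Ioc_eq_integral_Ioo]

lemma integrable_increment (hw : IsPotentialDensity ν w) (ht : 0 < t)
    (hk : IntegrableOn k (Ioo 0 t))
    (hqk : ∀ ⦃a b : ℝ⦄, 0 ≤ a → a ≤ b → b ≤ t → q b - q a = ∫ s in a..b, k s)
    (hq : IntegrableOn (fun p => q (p.2 + p.1)) (crossing t) (jumpMeasure ν w t)) :
    Integrable (fun p => q (p.2 + p.1) - q p.1) (jumpMeasure ν w t) :=
  ((hw.integrable_overshoot ht hq).add (hw.integrable_stopped_increment hk hqk)).congr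
    (increment_ae_eq_overshoot_add_stopped q).symm

lemma integral_increment [CompleteSpace X] (hw : IsPotentialDensity ν w) (ht : 0 < t)
    (hk : IntegrableOn k (Ioo 0 t))
    (hqk : ∀ ⦃a b : ℝ⦄, 0 ≤ a → a ≤ b → b ≤ t → q b - q a = ∫ s in a..b, k s)
    (hq : IntegrableOn (fun p => q (p.2 + p.1)) (crossing t) (jumpMeasure ν w t)) :
    ∫ p, (q (p.2 + p.1) - q p.1) ∂jumpMeasure ν w t =
      (∫ p in crossing t, q (p.2 + p.1) ∂jumpMeasure ν w t) - q 0 := by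
  rw [integral_congr_ae (increment_ae_eq_overshoot_add_stopped q),
    integral_add (hw.integrable_overshoot ht hq) (hw.integrable_stopped_increment hk hqk),
    hw.integral_overshoot ht hq, hw.integral_stopped_increment ht.le hk hqk, sub_add_sub_cancel]

end IsPotentialDensity

end JumpMeasure

section LevyMeasure

lemma sFinite_of_lintegral_ne_top {α : Type*} [MeasurableSpace α] {μ : Measure α}
    {f : α → ENNReal} (hf : AEMeasurable f μ) (hpos : ∀ᵐ x ∂μ, f x ≠ 0)
    (hfin : ∫⁻ x, f x ∂μ ≠ ⊤) : SFinite μ := by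
  have := isFiniteMeasure_withDensity hfin
  rw [← withDensity_inv_same₀ hf hpos ((ae_lt_top' hf hfin).mono fun _ => LT.lt.ne)]
  infer_instance

variable {X : Type*} [NormedAddCommGroup X] [NormedSpace ℝ X] {ν : Measure ℝ}

lemma sFinite_restrict_Ioi_of_lintegral_min_ne_top
    (hν : ∫⁻ r in Ioi (0 : ℝ), ENNReal.ofReal (min 1 r) ∂ν ≠ ⊤) :
    SFinite (ν.restrict (Ioi 0)) := by
  refine sFinite_of_lintegral_ne_top (by fun_prop) ?_ hν
  filter_upwards [ae_restrict_mem measurableSet_Ioi] with r hr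
  simpa using hr

lemma integrableOn_min_of_lintegral_ne_top
    (hν : ∫⁻ r in Ioi (0 : ℝ), ENNReal.ofReal (min 1 r) ∂ν ≠ ⊤) :
    IntegrableOn (fun r : ℝ => min 1 r) (Ioi 0) ν := by
  refine (lintegral_ofReal_ne_top_iff_integrable (by fun_prop) ?_).1 hν
  filter_upwards [ae_restrict_mem measurableSet_Ioi] with r hr
  exact le_min zero_le_one (le_of_lt hr)

/-- The generator of the driftless subordinator with Lévy measure `ν`, applied to `q` at `h`. -/
noncomputable def jumpGenerator (ν : Measure ℝ) (q : ℝ → X) (h : ℝ) : X :=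
  ∫ r in Ioi 0, (q (r + h) - q h) ∂ν

lemma norm_jumpGenerator_le (hν : IntegrableOn (fun r : ℝ => min 1 r) (Ioi 0) ν)
    {q : ℝ → X} {A B h : ℝ} (hA : ∀ s, ‖q s‖ ≤ A)
    (hB : ∀ r, 0 < r → ‖q (r + h) - q h‖ ≤ B * r) :
    ‖jumpGenerator ν q h‖ ≤ (2 * A + B) * ∫ r in Ioi 0, min 1 r ∂ν := by
  have hA0 : 0 ≤ A := (norm_nonneg _).trans (hA 0)
  have hB0 : 0 ≤ B := by simpa using (norm_nonneg _).trans (hB 1 one_pos)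
  rw [jumpGenerator, ← integral_const_mul]
  refine norm_integral_le_of_norm_le (hν.const_mul _) ?_
  filter_upwards [ae_restrict_mem measurableSet_Ioi] with r hr
  rcases le_total 1 r with h1 | h1
  · rw [min_eq_left h1]
    linarith [norm_sub_le (q (r + h)) (q h), hA (r + h), hA h]
  · rw [min_eq_right h1]
    linarith [hB r hr, mul_nonneg hA0 (le_of_lt hr)]

end LevyMeasure

section FirstPassage

variable {X : Type*} [NormedAddCommGroup X] [NormedSpace ℝ X] {P : ℝ → X →L[ℝ] X}
  {ν : Measure ℝ} {w : ℝ → ℝ} {t : ℝ}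

/-- The mean of `q` at the first passage over `t` of a driftless subordinator with Lévy measure `ν`
and potential density `w`: the jump over `t` starts at `h` and has size `r` with intensity
`w(h) dh ν(dr)` on `r > t - h`. -/
noncomputable def firstPassageMean (ν : Measure ℝ) (w : ℝ → ℝ) (q : ℝ → X) (t : ℝ) : X :=
  ∫ h in Ioo 0 t, w h • ∫ r in Ioi (t - h), q (r + h) ∂ν

/-- The time derivative of the mean of the orbit of `u` at first passage, as given by Dynkin's
formula. -/
noncomputable def passageDensity (P : ℝ → X →L[ℝ] X) (ν : Measure ℝ) (w : ℝ → ℝ) (u : X)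
    (h : ℝ) : X :=
  w h • jumpGenerator ν (orbit P u) h

lemma integrableOn_orbit_crossing [SFinite (ν.restrict (Ioi 0))] (hP : IsContractionSemigroup P)
    (hw : IsPotentialDensity ν w) (u : X) (ht : 0 < t) :
    IntegrableOn (fun p => orbit P u (p.2 + p.1)) (crossing t) (jumpMeasure ν w t) := by
  have hcont : Continuous fun p : ℝ × ℝ => orbit P u (p.2 + p.1) :=
    (hP.continuous_orbit u).comp (by fun_prop)
  refine Measure.integrableOn_of_bounded (M := ‖u‖) ?_ ?_ (.of_forall fun _ => hP.norm_orbit_le u _)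
  · simp [hw.jumpMeasure_crossing ht le_rfl]
  · exact hcont.aestronglyMeasurable

variable [CompleteSpace X] {u v : X}

lemma integrableOn_passageDensity [SFinite (ν.restrict (Ioi 0))] (hP : IsContractionSemigroup P)
    (hw : IsPotentialDensity ν w) (huv : HasGeneratorAt P u v) (ht : 0 < t) :
    IntegrableOn (passageDensity P ν w u) (Ioc 0 t) :=
  (integrableOn_Ioc_iff_integrableOn_Ioo).2 <| hw.integrable_jumpMeasure <|
    hw.integrable_increment ht
      ((hP.continuous_orbit v).integrableOn_Icc.mono_set Ioo_subset_Icc_self)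
      (fun _ _ ha hab _ => hP.orbit_sub_orbit_eq_integral huv ha hab)
      (integrableOn_orbit_crossing hP hw u ht)

lemma firstPassageMean_orbit_eq_add_integral [SFinite (ν.restrict (Ioi 0))]
    (hP : IsContractionSemigroup P) (hw : IsPotentialDensity ν w) (huv : HasGeneratorAt P u v)
    (ht : 0 < t) :
    firstPassageMean ν w (orbit P u) t = u + ∫ h in Ioc 0 t, passageDensity P ν w u h := by
  have hq := integrableOn_orbit_crossing hP hw u ht
  have hk : IntegrableOn (orbit P v) (Ioo 0 t) :=
    (hP.continuous_orbit v).integrableOn_Icc.mono_set Ioo_subset_Icc_self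
  have hqk : ∀ ⦃a b : ℝ⦄, 0 ≤ a → a ≤ b → b ≤ t →
      orbit P u b - orbit P u a = ∫ s in a..b, orbit P v s :=
    fun _ _ ha hab _ => hP.orbit_sub_orbit_eq_integral huv ha hab
  have hdynkin := hw.integral_increment ht hk hqk hq
  rw [hw.integral_jumpMeasure (hw.integrable_increment ht hk hqk hq),
    hw.setIntegral_crossing_jumpMeasure hq, hP.orbit_zero] at hdynkin
  rw [integral_Ioc_eq_integral_Ioo]
  exact sub_eq_iff_eq_add'.1 hdynkin.symm

lemma norm_passageDensity_le (hP : IsContractionSemigroup P) (hw : IsPotentialDensity ν w)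
    (hν : IntegrableOn (fun r : ℝ => min 1 r) (Ioi 0) ν) (huv : HasGeneratorAt P u v)
    (ht : 0 < t) :
    ‖passageDensity P ν w u t‖ ≤
      (2 * ‖u‖ + ‖v‖) * (∫ r in Ioi 0, min 1 r ∂ν) * w t := by
  have hlipschitz : ∀ r, 0 < r → ‖orbit P u (r + t) - orbit P u t‖ ≤ ‖v‖ * r := fun r hr => by
    simpa using hP.norm_orbit_sub_orbit_le huv ht.le (le_add_of_nonneg_left hr.le)
  rw [passageDensity, norm_smul, Real.norm_of_nonneg (hw.nonneg t ht), mul_comm]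
  exact mul_le_mul_of_nonneg_right (norm_jumpGenerator_le hν (hP.norm_orbit_le u) hlipschitz)
    (hw.nonneg t ht)

end FirstPassage

section ZeroAtInfty

variable {E : Type*} [TopologicalSpace E]

lemma norm_apply_le_norm {β : Type*} [SeminormedAddCommGroup β] (f : C₀(E, β)) (x : E) :
    ‖f x‖ ≤ ‖f‖ :=
  f.toBCF.norm_coe_le_norm x

/-- Evaluation at `x` as a continuous linear map on `C₀(E, β)`. -/
noncomputable def evalCLM (𝕜 : Type*) {β : Type*} [NormedField 𝕜] [SeminormedAddCommGroup β]
    [NormedSpace 𝕜 β] (x : E) : C₀(E, β) →L[𝕜] β :=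
  LinearMap.mkContinuous
    { toFun := fun f => f x, map_add' := fun _ _ => rfl, map_smul' := fun _ _ => rfl } 1
    fun f => by simpa using norm_apply_le_norm f x

lemma cand_eq_firstPassageMean (P : ℝ → C₀(E, ℝ) →L[ℝ] C₀(E, ℝ)) (ν : Measure ℝ) (w : ℝ → ℝ)
    (u : C₀(E, ℝ)) {t : ℝ} (ht : 0 < t) :
    cand P ν w u t = firstPassageMean ν w (orbit P u) t := by
  rw [cand, if_neg ht.ne', firstPassageMean]
  refine setIntegral_congr_fun measurableSet_Ioo fun h _ => ?_
  have hinner : ∫ r in Ioi (t - h), P (r + h) u ∂ν = ∫ r in Ioi (t - h), orbit P u (r + h) ∂ν := by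
    refine setIntegral_congr_fun measurableSet_Ioi fun r hr => ?_
    have hpos : 0 ≤ r + h := by linarith [mem_Ioi.1 hr]
    simp only [orbit, max_eq_left hpos]
  simp only [hinner]

end ZeroAtInfty

theorem ctrw_overshoot_aux_c_general {ν : Measure ℝ} {w : ℝ → ℝ}
    (hν : ∫⁻ r in Ioi (0 : ℝ), ENNReal.ofReal (min 1 r) ∂ν ≠ ⊤) (hw : IsPotentialDensity ν w) :
    ∃ C : ℝ, 0 < C ∧
      ∀ (E : Type*) [TopologicalSpace E] (P : ℝ → C₀(E, ℝ) →L[ℝ] C₀(E, ℝ)),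
        IsContractionSemigroup P → ∀ u Gu : C₀(E, ℝ), HasGeneratorAt P u Gu →
        ∃ g : ℝ → E → ℝ,
          (∀ (x : E) (T : ℝ), 0 < T → IntegrableOn (fun s => g s x) (Ioc 0 T)) ∧
          (∀ (x : E) (t : ℝ), 0 ≤ t →
            cand P ν w u t x = u x + ∫ s in Ioc 0 t, g s x) ∧
          (∀ᵐ t ∂volume.restrict (Ioi 0), ∀ x : E, |g t x| ≤ C * (‖u‖ + ‖Gu‖) * w t) := by
  have := sFinite_restrict_Ioi_of_lintegral_min_ne_top hν
  have hmin := integrableOn_min_of_lintegral_ne_top hν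
  have hmin_nonneg : 0 ≤ ∫ r in Ioi (0 : ℝ), min 1 r ∂ν :=
    setIntegral_nonneg measurableSet_Ioi fun r hr => le_min zero_le_one (le_of_lt hr)
  refine ⟨2 * (∫ r in Ioi (0 : ℝ), min 1 r ∂ν) + 1, by positivity, fun E _ P hP u Gu huv =>
    ⟨fun s x => passageDensity P ν w u s x, fun x T hT => ?_, fun x t ht => ?_, ?_⟩⟩
  · exact (evalCLM ℝ x).integrable_comp (integrableOn_passageDensity hP hw huv hT)
  · rcases ht.eq_or_lt with rfl | ht
    · simp [cand]
    · rw [cand_eq_firstPassageMean P ν w u ht, firstPassageMean_orbit_eq_add_integral hP hw huv ht]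
      exact congrArg (u x + ·) ((evalCLM ℝ x).integral_comp_comm
        (integrableOn_passageDensity hP hw huv ht)).symm
  · filter_upwards [ae_restrict_mem measurableSet_Ioi] with t ht x
    refine ((norm_apply_le_norm _ x).trans (norm_passageDensity_le hP hw hmin huv ht)).trans
      (mul_le_mul_of_nonneg_right ?_ (hw.nonneg t ht))
    nlinarith [norm_nonneg u, norm_nonneg Gu]

/-- Auxiliary lemma, part (c): there is a constant `C > 0` depending only on `ν` and `u^φ`
such that for every `u ∈ D(G)` and every `x ∈ E` the map `t ↦ Q(t)(x)` is absolutely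
continuous on compact subintervals of `[0,∞)` (it has a locally integrable density `g`),
and for almost every `t > 0`, `sup_x |∂_t Q(t)(x)| ≤ C(‖u‖∞ + ‖Gu‖∞) u^φ(t)`. -/
theorem ctrw_overshoot_aux_c
    {E : Type*} [MetricSpace E] [TopologicalSpace.SeparableSpace E] [LocallyCompactSpace E]
    (P : ℝ → C₀(E, ℝ) →L[ℝ] C₀(E, ℝ))
    (hP0 : P 0 = ContinuousLinearMap.id ℝ C₀(E, ℝ))
    (hPsg : ∀ s t : ℝ, 0 ≤ s → 0 ≤ t → P (s + t) = (P s).comp (P t))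
    (hPpos : ∀ t : ℝ, 0 ≤ t → ∀ f : C₀(E, ℝ), (∀ x, 0 ≤ f x) → ∀ x, 0 ≤ P t f x)
    (hPcon : ∀ t : ℝ, 0 ≤ t → ∀ f : C₀(E, ℝ), ‖P t f‖ ≤ ‖f‖)
    (hPsc : ∀ f : C₀(E, ℝ), Tendsto (fun t => P t f) (𝓝[≥] (0 : ℝ)) (𝓝 f))
    (ν : Measure ℝ)
    (hν1 : ∫⁻ s in Set.Ioi (0 : ℝ), ENNReal.ofReal (min 1 s) ∂ν ≠ ⊤)
    (hνinf : ν (Set.Ioi (0 : ℝ)) = ⊤)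
    (hνpos : ∀ t : ℝ, 0 < t → 0 < ν (Set.Ioi t))
    (uφ : ℝ → ℝ) (huφm : Measurable uφ)
    (huφ0 : ∀ t : ℝ, 0 < t → 0 ≤ uφ t)
    (huφmono : ∀ s t : ℝ, 0 < s → s ≤ t → uφ t ≤ uφ s)
    (hrenew : ∀ t : ℝ, 0 < t →
      ∫⁻ h in Set.Ioo 0 t, ν (Set.Ioi (t - h)) * ENNReal.ofReal (uφ h) = 1)
    (hlog : ∫⁻ t in Set.Ioo (0 : ℝ) 1, ENNReal.ofReal (|Real.log t| * uφ t) ≠ ⊤) :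
    ∃ C : ℝ, 0 < C ∧
      ∀ u Gu : C₀(E, ℝ),
        Tendsto (fun h : ℝ => h⁻¹ • (P h u - u)) (𝓝[>] (0 : ℝ)) (𝓝 Gu) →
        ∃ g : ℝ → E → ℝ,
          (∀ (x : E) (T : ℝ), 0 < T →
            IntegrableOn (fun s : ℝ => g s x) (Set.Ioc 0 T) volume) ∧
          (∀ (x : E) (t : ℝ), 0 ≤ t →
            (cand P ν uφ u t) x = u x + ∫ s in Set.Ioc (0 : ℝ) t, g s x) ∧
          (∀ᵐ t ∂(volume.restrict (Set.Ioi (0 : ℝ))),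
            ∀ x : E, |g t x| ≤ C * (‖u‖ + ‖Gu‖) * uφ t) := by
  obtain ⟨C, hC, h⟩ := ctrw_overshoot_aux_c_general hν1 ⟨huφm, huφ0, hrenew⟩
  exact ⟨C, hC, h E P ⟨hP0, hPsg, hPcon, hPsc⟩⟩
end
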